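/- Let H ∈ (1/4, 1/2) and α ∈ (H + 1/2, 1). Let h_α(t) = Σ_{n∈ℤ} 2^{−nα} sin(2^n π t). Suppose φ : ℝ → ℝ is C_b^∞ and satisfies sup_{r>0} inf_{x∈ℝ} sup_{y∈[x,x+r]} |φ'(y)| > 0, and ρ > 0 is defined as in the paper. Then there exists C > 0 such that J(λρ h_α) ≥ C λ^{(1−2H)/α} for all λ > 1, where J(x) = ∫_0^1 ∫_0^t (φ(x_t)−φ(x_s))²/(t−s)^{2−2H} ds dt. -/

import Mathlib

/-!
The path `h_α` is self-similar: `h_α (t / 2 ^ N) = 2 ^ (-N α) h_α t`. Choose `N` so that `2 ^ N` is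
comparable to `λ ^ (1 / α)`, with `2 ^ N ≥ λ ^ (1 / α)`. On each of the `2 ^ N` dyadic cells of
`[0, 1]` of side `2 ^ (-N)`, the path `λ ρ h_α` is then a copy of `v ↦ c h_α (v + k)`, `v ∈ [0, 1]`,
with an amplitude `c ∈ [2 ^ (-α) ρ, ρ]`. The constant `ρ` is calibrated so that such a copy covers
an interval of length `r` (`exists_Icc_subset_image`), and hence meets a point where `|φ'| ≥ η`.
Since `φ''` is bounded, `φ` moves by a fixed amount near that point, and by uniform Hölder
continuity two separated subintervals of fixed length carry values of `φ (c h_α (· + k))` that stay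
apart, uniformly in `c` and `k` (`cell_lemma`). Undoing the scaling, each diagonal cell contributes
at least a constant times `2 ^ (-2 N) * 2 ^ (N (2 - 2 H))` to the double integral; summing the
`2 ^ N` cells gives `2 ^ (N (1 - 2 H)) ≥ λ ^ ((1 - 2 H) / α)` (`double_integral_lower`).

Two points need care. The infimum in `ρ` must be positive: at `k + 1/8` the second difference of
`h_α` with step `1/8` is at least `3/16`, for every `k` (`second_difference`). And the integrals must
exist: as `1 - H < α`, the path is `(1 - H)`-Hölder, so the integrand is bounded.
-/


open Real MeasureTheory

/-- The two-sided Weierstrass-type series `h_α(t) = ∑_{n ∈ ℤ} 2^{-nα} sin(2^n π t)`. -/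
noncomputable def weierstrassH (α t : ℝ) : ℝ :=
  ∑' n : ℤ, (2 : ℝ) ^ (-(n : ℝ) * α) * Real.sin ((2 : ℝ) ^ n * π * t)

/-- The interior double integral `J(x)`. -/
noncomputable def Jfun (H : ℝ) (φ : ℝ → ℝ) (x : ℝ → ℝ) : ℝ :=
  ∫ t in (0 : ℝ)..1, ∫ s in (0 : ℝ)..t,
    (φ (x t) - φ (x s)) ^ 2 / (t - s) ^ (2 - 2 * H)

/-- The scaling constant `ρ = 2^α r / inf_k sup_{v₁,v₂∈[0,1]} |h_α(v₁+k) - h_α(v₂+k)|`. -/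
noncomputable def rhoConst (α r : ℝ) : ℝ :=
  (2 : ℝ) ^ α * r /
    ⨅ k : ℕ, ⨆ v₁ ∈ Set.Icc (0 : ℝ) 1, ⨆ v₂ ∈ Set.Icc (0 : ℝ) 1,
      |weierstrassH α (v₁ + k) - weierstrassH α (v₂ + k)|


/-! ### The series `h_α`: convergence, Hölder continuity, scaling -/

section
variable {α : ℝ}

/-- The `n`-th summand of `weierstrassH`. -/
noncomputable def wTerm (α : ℝ) (n : ℤ) (t : ℝ) : ℝ :=
  (2 : ℝ) ^ (-(n : ℝ) * α) * Real.sin ((2 : ℝ) ^ n * π * t)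

lemma abs_sin_sub_le (a b : ℝ) : |Real.sin a - Real.sin b| ≤ |a - b| := by
  have := Real.lipschitzWith_sin.dist_le_mul a b
  simpa [Real.dist_eq] using this

lemma abs_sin_sub_le_rpow {γ : ℝ} (h0 : 0 ≤ γ) (h1 : γ ≤ 1) (a b : ℝ) :
    |Real.sin a - Real.sin b| ≤ 2 * |a - b| ^ γ := by
  rcases le_total |a - b| 1 with h | h
  · have h2 : |a - b| ≤ |a - b| ^ γ := by
      rcases (abs_nonneg (a - b)).eq_or_lt with h3 | h3
      · rw [← h3]; positivity
      · simpa using Real.rpow_le_rpow_of_exponent_ge h3 h h1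
    have := abs_sin_sub_le a b
    have := abs_nonneg (a - b)
    linarith
  · have h2 : 1 ≤ |a - b| ^ γ := Real.one_le_rpow h h0
    have := Real.abs_sin_le_one a
    have := Real.abs_sin_le_one b
    have := abs_sub (Real.sin a) (Real.sin b)
    linarith

lemma two_zpow_eq (n : ℤ) : (2 : ℝ) ^ n = (2 : ℝ) ^ (n : ℝ) := (Real.rpow_intCast 2 n).symm

lemma summable_geom_natAbs {q : ℝ} (h0 : 0 ≤ q) (h1 : q < 1) :
    Summable fun n : ℤ => q ^ n.natAbs := by
  apply Summable.of_nat_of_neg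
  · simpa using summable_geometric_of_lt_one h0 h1
  · simpa using summable_geometric_of_lt_one h0 h1

/-- Summable majorant for the increments of the summands: the summands of index `n ≥ 0` are
controlled by their `γ`-Hölder seminorm, those of negative index by their Lipschitz constant. -/
lemma exists_majorant {γ : ℝ} (h0 : 0 ≤ γ) (hγ : γ < α) (h1 : α < 1) :
    ∃ w : ℤ → ℝ, Summable w ∧ ∀ n t s,
      |wTerm α n t - wTerm α n s| ≤ w n * max (|t - s| ^ γ) |t - s| := by
  set ε := min (α - γ) (1 - α) with hε
  have hε0 : 0 < ε := lt_min (by linarith) (by linarith)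
  have hq : (2 : ℝ) ^ (-ε) < 1 := Real.rpow_lt_one_of_one_lt_of_neg (by norm_num) (by linarith)
  refine ⟨fun n => 8 * ((2 : ℝ) ^ (-ε)) ^ n.natAbs,
    (summable_geom_natAbs (by positivity) hq).mul_left 8, fun n t s => ?_⟩
  have e : wTerm α n t - wTerm α n s = (2 : ℝ) ^ (-(n : ℝ) * α) *
      (Real.sin ((2 : ℝ) ^ n * π * t) - Real.sin ((2 : ℝ) ^ n * π * s)) := by
    unfold wTerm; ring
  have hpow : ((2 : ℝ) ^ (-ε)) ^ n.natAbs = (2 : ℝ) ^ (-ε * |(n : ℝ)|) := by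
    rw [← Real.rpow_natCast, ← Real.rpow_mul (by norm_num)]
    congr 2
    rw [← Int.cast_natCast (R := ℝ), Int.natCast_natAbs]; push_cast; rfl
  have hd : |(2 : ℝ) ^ n * π * t - (2 : ℝ) ^ n * π * s| = (2 : ℝ) ^ n * π * |t - s| := by
    rw [← mul_sub, abs_mul, abs_of_pos (by positivity)]
  rw [e, abs_mul, abs_of_pos (by positivity)]
  beta_reduce
  rw [hpow]
  have hmax : 0 ≤ max (|t - s| ^ γ) |t - s| := le_max_of_le_right (abs_nonneg _)
  rcases le_total 0 n with hn | hn
  · have hn' : (0 : ℝ) ≤ n := by exact_mod_cast hn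
    have h := abs_sin_sub_le_rpow h0 (by linarith : γ ≤ 1)
      ((2 : ℝ) ^ n * π * t) ((2 : ℝ) ^ n * π * s)
    rw [hd, Real.mul_rpow (by positivity) (abs_nonneg _), Real.mul_rpow (by positivity)
      (by positivity), two_zpow_eq, ← Real.rpow_mul (by norm_num)] at h
    have hπ : π ^ γ ≤ 4 := by
      calc π ^ γ ≤ π ^ (1 : ℝ) :=
            Real.rpow_le_rpow_of_exponent_le (by linarith [Real.pi_gt_three]) (by linarith)
        _ ≤ 4 := by simpa using Real.pi_le_four
    rw [two_zpow_eq]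
    calc _ ≤ (2 : ℝ) ^ (-(n : ℝ) * α) * (2 * ((2 : ℝ) ^ ((n : ℝ) * γ) * π ^ γ * |t - s| ^ γ)) := by
          gcongr
      _ = 2 * π ^ γ * (2 : ℝ) ^ (-(n : ℝ) * (α - γ)) * |t - s| ^ γ := by
          rw [show -(n : ℝ) * (α - γ) = -(n : ℝ) * α + n * γ by ring, Real.rpow_add (by norm_num)]
          ring
      _ ≤ 2 * 4 * (2 : ℝ) ^ (-ε * |(n : ℝ)|) * max (|t - s| ^ γ) |t - s| := by
          have hexp : -(n : ℝ) * (α - γ) ≤ -ε * |(n : ℝ)| := by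
            rw [abs_of_nonneg hn']; nlinarith [min_le_left (α - γ) (1 - α)]
          have h2 := Real.rpow_le_rpow_of_exponent_le (one_le_two (α := ℝ)) hexp
          have h3 := le_max_left (|t - s| ^ γ) |t - s|
          exact mul_le_mul (mul_le_mul (by gcongr) h2 (by positivity) (by norm_num)) h3
            (by positivity) (by positivity)
      _ = _ := by ring
  · have hn' : (n : ℝ) ≤ 0 := by exact_mod_cast hn
    have h := abs_sin_sub_le ((2 : ℝ) ^ n * π * t) ((2 : ℝ) ^ n * π * s)
    rw [hd, two_zpow_eq] at h
    rw [two_zpow_eq]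
    calc _ ≤ (2 : ℝ) ^ (-(n : ℝ) * α) * ((2 : ℝ) ^ (n : ℝ) * π * |t - s|) := by gcongr
      _ = π * (2 : ℝ) ^ ((n : ℝ) * (1 - α)) * |t - s| := by
          rw [show (n : ℝ) * (1 - α) = -(n : ℝ) * α + n by ring, Real.rpow_add (by norm_num)]
          ring
      _ ≤ 8 * (2 : ℝ) ^ (-ε * |(n : ℝ)|) * max (|t - s| ^ γ) |t - s| := by
          have hexp : (n : ℝ) * (1 - α) ≤ -ε * |(n : ℝ)| := by
            rw [abs_of_nonpos hn']; nlinarith [min_le_right (α - γ) (1 - α)]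
          have h2 := Real.rpow_le_rpow_of_exponent_le (one_le_two (α := ℝ)) hexp
          have h3 := le_max_right (|t - s| ^ γ) |t - s|
          exact mul_le_mul (mul_le_mul (by linarith [Real.pi_le_four]) h2 (by positivity)
            (by norm_num)) h3 (by positivity) (by positivity)

lemma summable_wTerm (h0 : 0 < α) (h1 : α < 1) (t : ℝ) : Summable fun n => wTerm α n t := by
  obtain ⟨w, hw, hb⟩ := exists_majorant (le_refl (0 : ℝ)) h0 h1
  refine Summable.of_norm_bounded (hw.mul_right (max (|t - 0| ^ (0 : ℝ)) |t - 0|)) fun n => ?_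
  simpa [wTerm] using hb n t 0

/-- `h_α` is uniformly `γ`-Hölder on scales at most `1`, for every `γ < α`. A Hölder exponent
strictly below `α` is enough here and makes the majorant summable without splitting the series at
the scale `|t - s|`. -/
lemma weierstrassH_holder {γ : ℝ} (h0 : 0 < γ) (hγ : γ < α) (h1 : α < 1) :
    ∃ M : ℝ, 0 < M ∧ ∀ t s, |t - s| ≤ 1 →
      |weierstrassH α t - weierstrassH α s| ≤ M * |t - s| ^ γ := by
  obtain ⟨w, hw, hb⟩ := exists_majorant h0.le hγ h1
  have hw0 : ∀ n, 0 ≤ w n := fun n => by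
    have := hb n 1 0
    simp at this
    exact (abs_nonneg _).trans this
  have hsum0 : 0 ≤ ∑' n, w n := tsum_nonneg hw0
  refine ⟨∑' n, w n + 1, by linarith, fun t s hts => ?_⟩
  have hm : max (|t - s| ^ γ) |t - s| = |t - s| ^ γ := by
    apply max_eq_left
    rcases (abs_nonneg (t - s)).eq_or_lt with h3 | h3
    · rw [← h3]; positivity
    · simpa using Real.rpow_le_rpow_of_exponent_ge h3 hts (by linarith : γ ≤ 1)
  have hα := h0.trans hγ
  have e : weierstrassH α t - weierstrassH α s = ∑' n, (wTerm α n t - wTerm α n s) :=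
    ((summable_wTerm hα h1 t).tsum_sub (summable_wTerm hα h1 s)).symm
  have : |∑' n, (wTerm α n t - wTerm α n s)| ≤ ∑' n, w n * |t - s| ^ γ := by
    rw [← Real.norm_eq_abs]
    refine tsum_of_norm_bounded (hw.mul_right (|t - s| ^ γ)).hasSum fun n => ?_
    have := hb n t s
    rwa [hm] at this
  rw [e]
  refine this.trans ?_
  rw [tsum_mul_right]
  gcongr
  linarith

lemma weierstrassH_continuous (h0 : 0 < α) (h1 : α < 1) : Continuous (weierstrassH α) := by
  obtain ⟨M, hM, hb⟩ := weierstrassH_holder (half_pos h0) (half_lt_self h0) h1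
  rw [continuous_iff_continuousAt]
  intro s
  rw [ContinuousAt, tendsto_iff_dist_tendsto_zero]
  have hlim : Filter.Tendsto (fun t => M * |t - s| ^ (α / 2)) (nhds s) (nhds 0) := by
    have : Continuous fun t => M * |t - s| ^ (α / 2) := by
      refine continuous_const.mul (Continuous.rpow_const (by fun_prop) fun _ => Or.inr (by linarith))
    have := this.tendsto s
    simpa [Real.zero_rpow (half_pos h0).ne'] using this
  refine squeeze_zero' (Filter.Eventually.of_forall fun _ => dist_nonneg) ?_ hlim
  filter_upwards [Metric.closedBall_mem_nhds s one_pos] with t ht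
  exact hb t s (by simpa [Real.dist_eq] using ht)

lemma weierstrassH_two_mul (t : ℝ) : weierstrassH α (2 * t) = 2 ^ α * weierstrassH α t := by
  have : weierstrassH α t = ∑' n : ℤ, wTerm α (n + 1) t :=
    ((Equiv.addRight (1 : ℤ)).tsum_eq (fun n => wTerm α n t)).symm
  rw [this, ← tsum_mul_left]
  unfold weierstrassH
  congr 1; ext n
  unfold wTerm
  rw [← mul_assoc (2 ^ α : ℝ), ← Real.rpow_add (by norm_num), zpow_add₀ (by norm_num)]
  congr 2
  · push_cast; ring
  · rw [zpow_one]; ring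

lemma weierstrassH_div_pow (N : ℕ) (t : ℝ) :
    weierstrassH α (t / 2 ^ N) = ((2 : ℝ) ^ N) ^ (-α) * weierstrassH α t := by
  induction N generalizing t with
  | zero => simp
  | succ N ih =>
    have h := weierstrassH_two_mul (α := α) (t / 2 ^ (N + 1))
    rw [show 2 * (t / 2 ^ (N + 1)) = t / 2 ^ N by rw [pow_succ]; field_simp, ih] at h
    rw [pow_succ, Real.mul_rpow (by positivity) (by norm_num), mul_assoc, mul_comm _ (weierstrassH α t),
      ← mul_assoc, h, Real.rpow_neg (by norm_num) α, ← pow_succ]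
    have : (2 : ℝ) ^ α ≠ 0 := by positivity
    field_simp

/-! ### Oscillation on unit cells -/

/-- The second difference of `h_α` at `k + 1/8` with step `1/8` is bounded away from zero:
the summands of index `n ≥ 3` vanish there, those of index `1` and `2` have the same sign, and
the low-frequency ones (`n ≤ 0`) are too flat to compensate the summand of index `2`. -/
lemma second_difference (h0 : 0 < α) (h1 : α < 1) (k : ℕ) :
    3 / 16 ≤ 2 * weierstrassH α (1 / 8 + k) - weierstrassH α (0 + k)
      - weierstrassH α (1 / 4 + k) := by
  set b : ℤ → ℝ := fun n => 2 * wTerm α n (1 / 8 + k) - wTerm α n (0 + k) - wTerm α n (1 / 4 + k)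
    with hb
  have hbs : HasSum b (2 * weierstrassH α (1 / 8 + k) - weierstrassH α (0 + k)
      - weierstrassH α (1 / 4 + k)) :=
    (((summable_wTerm h0 h1 _).hasSum.mul_left 2).sub (summable_wTerm h0 h1 _).hasSum).sub
      (summable_wTerm h0 h1 _).hasSum
  have hbn : ∀ n : ℤ, b n = (2 : ℝ) ^ (-(n : ℝ) * α) *
      ((2 - 2 * Real.cos ((2 : ℝ) ^ n * π / 8)) * Real.sin ((2 : ℝ) ^ n * π * (1 / 8 + k))) := by
    intro n
    simp only [hb, wTerm]
    have e1 : (2 : ℝ) ^ n * π * (0 + k) = (2 : ℝ) ^ n * π * (1 / 8 + k) - (2 : ℝ) ^ n * π / 8 := by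
      ring
    have e2 : (2 : ℝ) ^ n * π * (1 / 4 + k) =
      (2 : ℝ) ^ n * π * (1 / 8 + k) + (2 : ℝ) ^ n * π / 8 := by ring
    rw [e1, e2, Real.sin_sub, Real.sin_add]
    ring
  set c : ℤ → ℝ := fun n => if n = 2 then 1 / 2 else if n ≤ 0 then -(10 / 64) * (2 : ℝ) ^ n else 0
    with hc
  have hcs : HasSum c (3 / 16) := by
    have hpos : HasSum (fun n : ℕ => c n) (∑ n ∈ Finset.range 3, c (n : ℕ)) := by
      apply hasSum_sum_of_ne_finset_zero
      intro n hn
      simp only [Finset.mem_range, not_lt] at hn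
      simp only [hc]
      rw [if_neg (by omega), if_neg (by omega)]
    have hneg : HasSum (fun n : ℕ => c (-((n : ℤ) + 1))) (-(10 / 64)) := by
      have h := (hasSum_geometric_two' (-(10 / 64) : ℝ))
      convert h using 2 with n
      simp only [hc]
      rw [if_neg (by omega), if_pos (by omega), zpow_neg, zpow_add₀ (by norm_num)]
      simp
      ring
    have h := HasSum.of_nat_of_neg_add_one hpos hneg
    convert h using 1
    simp [Finset.sum_range_succ, hc]
    norm_num
  refine hasSum_le (fun n => ?_) hcs hbs
  rw [hbn]
  have hcos : 0 ≤ 2 - 2 * Real.cos ((2 : ℝ) ^ n * π / 8) := by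
    linarith [Real.cos_le_one ((2 : ℝ) ^ n * π / 8)]
  simp only [hc]
  split_ifs with h2 hn
  · subst h2
    have e1 : (2 : ℝ) ^ (2 : ℤ) * π / 8 = π / 2 := by norm_num; ring
    have e2 : (2 : ℝ) ^ (2 : ℤ) * π * (1 / 8 + k) = π / 2 + (2 * k : ℕ) * (2 * π) := by
      push_cast; norm_num; ring
    rw [e1, e2, Real.sin_add_nat_mul_two_pi]
    have : (2 : ℝ) ^ (-2 : ℝ) ≤ (2 : ℝ) ^ (-((2 : ℤ) : ℝ) * α) :=
      Real.rpow_le_rpow_of_exponent_le (by norm_num) (by push_cast; linarith)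
    have h4 : (2 : ℝ) ^ (-2 : ℝ) = 1 / 4 := by
      rw [show (-2 : ℝ) = ((-2 : ℤ) : ℝ) by norm_num, Real.rpow_intCast]; norm_num
    rw [h4] at this
    rw [Real.cos_pi_div_two, Real.sin_pi_div_two]
    generalize (2 : ℝ) ^ (-((2 : ℤ) : ℝ) * α) = X at this ⊢
    linarith
  · have hn' : (n : ℝ) ≤ 0 := by exact_mod_cast hn
    have hup : 2 - 2 * Real.cos ((2 : ℝ) ^ n * π / 8) ≤ ((2 : ℝ) ^ n * π / 8) ^ 2 := by
      linarith [Real.one_sub_sq_div_two_le_cos (x := (2 : ℝ) ^ n * π / 8)]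
    have hprod : -((2 : ℝ) ^ n * π / 8) ^ 2 ≤ (2 - 2 * Real.cos ((2 : ℝ) ^ n * π / 8)) *
        Real.sin ((2 : ℝ) ^ n * π * (1 / 8 + k)) := by
      nlinarith [Real.neg_one_le_sin ((2 : ℝ) ^ n * π * (1 / 8 + k))]
    have hπ : π ^ 2 ≤ 10 := by nlinarith [Real.pi_lt_d2, Real.pi_pos]
    have hp : (2 : ℝ) ^ (-(n : ℝ) * α) * ((2 : ℝ) ^ n) ≤ 1 := by
      rw [two_zpow_eq, ← Real.rpow_add (by norm_num)]
      exact Real.rpow_le_one_of_one_le_of_nonpos (by norm_num) (by nlinarith)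
    have h2n : (0 : ℝ) < (2 : ℝ) ^ n := by positivity
    calc -(10 / 64) * (2 : ℝ) ^ n
        ≤ -(π ^ 2 / 64 * (2 : ℝ) ^ n * ((2 : ℝ) ^ (-(n : ℝ) * α) * (2 : ℝ) ^ n)) := by
          have : π ^ 2 / 64 * (2 : ℝ) ^ n * ((2 : ℝ) ^ (-(n : ℝ) * α) * (2 : ℝ) ^ n) ≤
            10 / 64 * (2 : ℝ) ^ n * 1 := by gcongr
          linarith
      _ = (2 : ℝ) ^ (-(n : ℝ) * α) * (-((2 : ℝ) ^ n * π / 8) ^ 2) := by ring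
      _ ≤ _ := by gcongr
  · apply mul_nonneg (by positivity)
    apply mul_nonneg hcos
    have hn1 : 1 ≤ n := by omega
    obtain ⟨m, rfl⟩ : ∃ m : ℕ, n = (m : ℤ) + 1 := ⟨(n - 1).toNat, by omega⟩
    clear hcos hn hn1
    have e : (2 : ℝ) ^ ((m : ℤ) + 1) * π * (1 / 8 + k) =
        (2 : ℝ) ^ m * (π / 4) + ((2 ^ m * k : ℕ) : ℝ) * (2 * π) := by
      rw [zpow_add₀ (by norm_num)]; push_cast; simp; ring
    rw [e, Real.sin_add_nat_mul_two_pi]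
    match m, h2 with
    | 0, _ =>
      exact Real.sin_nonneg_of_nonneg_of_le_pi (by norm_num; positivity)
        (by norm_num; linarith [Real.pi_pos])
    -- index `n = 2` is the case already treated
    | 1, h2 => exact absurd rfl h2
    | m + 2, _ =>
      have : (2 : ℝ) ^ (m + 2) * (π / 4) = ((2 ^ m : ℕ) : ℝ) * π := by push_cast; ring
      rw [this, Real.sin_nat_mul_pi]

/-- The oscillation of `h_α` over `[k, k + 1]`, as it enters `rhoConst`. -/
noncomputable def oscH (α : ℝ) (k : ℕ) : ℝ :=
  ⨆ v₁ ∈ Set.Icc (0 : ℝ) 1, ⨆ v₂ ∈ Set.Icc (0 : ℝ) 1,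
      |weierstrassH α (v₁ + k) - weierstrassH α (v₂ + k)|

lemma oscH_nonneg (k : ℕ) : 0 ≤ oscH α k :=
  Real.iSup_nonneg fun _ => Real.iSup_nonneg fun _ => Real.iSup_nonneg fun _ =>
    Real.iSup_nonneg fun _ => abs_nonneg _

lemma oscH_le {k : ℕ} {D : ℝ} (hD : 0 ≤ D) (h : ∀ v₁ ∈ Set.Icc (0 : ℝ) 1,
    ∀ v₂ ∈ Set.Icc (0 : ℝ) 1, |weierstrassH α (v₁ + k) - weierstrassH α (v₂ + k)| ≤ D) :
    oscH α k ≤ D :=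
  Real.iSup_le (fun v₁ => Real.iSup_le (fun h₁ => Real.iSup_le (fun v₂ =>
    Real.iSup_le (fun h₂ => h v₁ h₁ v₂ h₂) hD) hD) hD) hD

/-- The real suprema in `oscH` are over bounded families, so they dominate each increment. -/
lemma le_oscH (h0 : 0 < α) (h1 : α < 1) (k : ℕ) {v₁ v₂ : ℝ} (hv₁ : v₁ ∈ Set.Icc (0 : ℝ) 1)
    (hv₂ : v₂ ∈ Set.Icc (0 : ℝ) 1) :
    |weierstrassH α (v₁ + k) - weierstrassH α (v₂ + k)| ≤ oscH α k := by
  obtain ⟨M, hM, hb⟩ := weierstrassH_holder (half_pos h0) (half_lt_self h0) h1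
  have hbd : ∀ v₁ ∈ Set.Icc (0 : ℝ) 1, ∀ v₂ ∈ Set.Icc (0 : ℝ) 1,
      |weierstrassH α (v₁ + k) - weierstrassH α (v₂ + k)| ≤ M := by
    intro a ha b hb'
    have hab : |a + k - (b + k)| ≤ 1 := by
      rw [abs_le]; constructor <;> linarith [ha.1, ha.2, hb'.1, hb'.2]
    refine (hb _ _ hab).trans ?_
    have := Real.rpow_le_one (abs_nonneg (a + k - (b + k))) hab (half_pos h0).le
    nlinarith
  have inner : ∀ v₁ ∈ Set.Icc (0 : ℝ) 1, (⨆ v₂ ∈ Set.Icc (0 : ℝ) 1,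
      |weierstrassH α (v₁ + k) - weierstrassH α (v₂ + k)|) ≤ M := fun v₁ h₁ =>
    Real.iSup_le (fun v₂ => Real.iSup_le (fun h₂ => hbd v₁ h₁ v₂ h₂) hM.le) hM.le
  refine le_trans ?_ (le_ciSup (f := fun v₁ => ⨆ (_ : v₁ ∈ Set.Icc (0 : ℝ) 1),
      ⨆ v₂ ∈ Set.Icc (0 : ℝ) 1, |weierstrassH α (v₁ + k) - weierstrassH α (v₂ + k)|)
      ⟨M, ?_⟩ v₁)
  · rw [ciSup_pos hv₁]
    refine le_trans ?_ (le_ciSup (f := fun v₂ => ⨆ (_ : v₂ ∈ Set.Icc (0 : ℝ) 1),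
      |weierstrassH α (v₁ + k) - weierstrassH α (v₂ + k)|) ⟨M, ?_⟩ v₂)
    · rw [ciSup_pos hv₂]
    · rintro _ ⟨v, rfl⟩
      exact Real.iSup_le (fun h₂ => hbd v₁ hv₁ v h₂) hM.le
  · rintro _ ⟨v, rfl⟩
    exact Real.iSup_le (fun h => inner v h) hM.le

lemma oscH_lower (h0 : 0 < α) (h1 : α < 1) (k : ℕ) : 3 / 32 ≤ oscH α k := by
  have h := second_difference h0 h1 k
  have ha := le_oscH h0 h1 k (v₁ := 1 / 8) (v₂ := 0) (by norm_num) (by norm_num)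
  have hb := le_oscH h0 h1 k (v₁ := 1 / 8) (v₂ := 1 / 4) (by norm_num) (by norm_num)
  linarith [le_abs_self (weierstrassH α (1 / 8 + k) - weierstrassH α (0 + k)),
    le_abs_self (weierstrassH α (1 / 8 + k) - weierstrassH α (1 / 4 + k))]

lemma rhoConst_eq (α r : ℝ) : rhoConst α r = 2 ^ α * r / ⨅ k, oscH α k := rfl

lemma iInf_oscH_pos (h0 : 0 < α) (h1 : α < 1) : 0 < ⨅ k, oscH α k :=
  lt_of_lt_of_le (by norm_num) (le_ciInf (oscH_lower h0 h1))

lemma rhoConst_pos (h0 : 0 < α) (h1 : α < 1) {r : ℝ} (hr : 0 < r) : 0 < rhoConst α r := by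
  rw [rhoConst_eq]
  have := iInf_oscH_pos h0 h1
  positivity

lemma two_rpow_mul_le_rho_osc (h0 : 0 < α) (h1 : α < 1) {r : ℝ} (hr : 0 < r) (k : ℕ) :
    2 ^ α * r ≤ rhoConst α r * oscH α k := by
  have hI := iInf_oscH_pos h0 h1
  have hle : (⨅ k, oscH α k) ≤ oscH α k :=
    ciInf_le ⟨0, by rintro _ ⟨j, rfl⟩; exact oscH_nonneg j⟩ k
  rw [rhoConst_eq, div_mul_eq_mul_div, le_div_iff₀ hI]
  gcongr

/-- For `c ≥ 2^{-α} ρ` the path `v ↦ c h_α(v + k)` covers an interval of length `r` on `[0, 1]`. -/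
lemma exists_Icc_subset_image (h0 : 0 < α) (h1 : α < 1) {r : ℝ} (hr : 0 < r) (k : ℕ) {c : ℝ}
    (hc : 2 ^ (-α) * rhoConst α r ≤ c) :
    ∃ a, Set.Icc a (a + r) ⊆ (fun v => c * weierstrassH α (v + k)) '' Set.Icc 0 1 := by
  have hρ := rhoConst_pos h0 h1 hr
  have hc0 : 0 < c := lt_of_lt_of_le (by positivity) hc
  have hcont : Continuous fun v : ℝ => c * weierstrassH α (v + k) := by
    have := weierstrassH_continuous h0 h1
    fun_prop
  obtain ⟨p, hp, hpm⟩ := isCompact_Icc.exists_isMinOn (Set.nonempty_Icc.2 zero_le_one)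
    hcont.continuousOn (s := Set.Icc (0 : ℝ) 1)
  obtain ⟨q, hq, hqm⟩ := isCompact_Icc.exists_isMaxOn (Set.nonempty_Icc.2 zero_le_one)
    hcont.continuousOn (s := Set.Icc (0 : ℝ) 1)
  have hpm' : ∀ v ∈ Set.Icc (0 : ℝ) 1, c * weierstrassH α (p + k) ≤ c * weierstrassH α (v + k) :=
    fun v hv => hpm hv
  have hqm' : ∀ v ∈ Set.Icc (0 : ℝ) 1, c * weierstrassH α (v + k) ≤ c * weierstrassH α (q + k) :=
    fun v hv => hqm hv
  have hosc : oscH α k ≤ weierstrassH α (q + k) - weierstrassH α (p + k) := by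
    refine oscH_le (by have := hpm' q hq; nlinarith) fun v₁ hv₁ v₂ hv₂ => ?_
    have a1 := le_of_mul_le_mul_left (hpm' v₁ hv₁) hc0
    have a2 := le_of_mul_le_mul_left (hpm' v₂ hv₂) hc0
    have a3 := le_of_mul_le_mul_left (hqm' v₁ hv₁) hc0
    have a4 := le_of_mul_le_mul_left (hqm' v₂ hv₂) hc0
    rw [abs_le]; constructor <;> linarith
  have hlen : r ≤ c * weierstrassH α (q + k) - c * weierstrassH α (p + k) := by
    have e : (2 : ℝ) ^ (-α) * 2 ^ α = 1 := by rw [← Real.rpow_add (by norm_num)]; simp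
    calc r = 2 ^ (-α) * (2 ^ α * r) := by rw [← mul_assoc, e, one_mul]
      _ ≤ 2 ^ (-α) * (rhoConst α r * oscH α k) := by
          exact mul_le_mul_of_nonneg_left (two_rpow_mul_le_rho_osc h0 h1 hr k) (by positivity)
      _ = 2 ^ (-α) * rhoConst α r * oscH α k := by ring
      _ ≤ c * oscH α k := by gcongr; exact oscH_nonneg k
      _ ≤ c * (weierstrassH α (q + k) - weierstrassH α (p + k)) := by gcongr
      _ = _ := by ring
  refine ⟨c * weierstrassH α (p + k), fun y hy => ?_⟩
  have hsub : Set.uIcc p q ⊆ Set.Icc 0 1 := Set.uIcc_subset_Icc hp hq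
  obtain ⟨v, hv, hvy⟩ := intermediate_value_uIcc (hcont.continuousOn (s := Set.uIcc p q))
    (Set.mem_uIcc_of_le hy.1 (hy.2.trans (by linarith)) : y ∈ _)
  exact ⟨v, hsub hv, hvy⟩
end

/-! ### Non-degeneracy of `φ` along the rescaled path -/

/-- A quantitative mean value argument: if `φ'` is `B`-Lipschitz and at least `η` in modulus at
`y`, then `φ` moves by at least `η |d| / 2` from `y` to `y + d`, for either sign of `d`, as long as
`B |d| ≤ η / 2`. -/
lemma phi_variation {φ : ℝ → ℝ} (hd : Differentiable ℝ φ) {B η y d : ℝ}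
    (hB : ∀ a b, |deriv φ a - deriv φ b| ≤ B * |a - b|) (hB0 : 0 ≤ B)
    (hy : η ≤ |deriv φ y|) (hBd : B * |d| ≤ η / 2) :
    η / 2 * |d| ≤ |φ (y + d) - φ y| := by
  have key : ∀ a b : ℝ, a < b → |a - y| ≤ |d| → |b - y| ≤ |d| →
      η / 2 * (b - a) ≤ |φ b - φ a| := by
    intro a b hab ha hb
    obtain ⟨ξ, hξ, he⟩ := exists_deriv_eq_slope φ hab hd.continuous.continuousOn
      hd.differentiableOn
    have hba : 0 < b - a := by linarith
    have h1 : φ b - φ a = deriv φ ξ * (b - a) := by rw [he]; field_simp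
    have hξy : |ξ - y| ≤ |d| := by
      rw [abs_le] at *
      exact ⟨by linarith [hξ.1], by linarith [hξ.2]⟩
    have h2 : η / 2 ≤ |deriv φ ξ| := by
      have h3 := hB y ξ
      have h4 : B * |y - ξ| ≤ B * |d| := by rw [abs_sub_comm]; gcongr
      have h5 := abs_sub_abs_le_abs_sub (deriv φ y) (deriv φ ξ)
      linarith
    rw [h1, abs_mul, abs_of_pos hba]
    gcongr
  rcases lt_trichotomy d 0 with h | h | h
  · have := key (y + d) y (by linarith) (by simp) (by simp)
    rw [abs_of_neg h, abs_sub_comm]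
    linarith
  · simp [h]
  · have := key y (y + d) (by linarith) (by simp) (by simp)
    rw [abs_of_pos h]
    linarith

/-- Non-degeneracy of `φ ∘ (c h_α)` on unit cells, uniformly in the cell `[k, k + 1]` and in the
amplitude `c`: there are two separated subintervals of fixed length on which it takes values
differing by a fixed amount. -/
lemma cell_lemma {α r η : ℝ} {φ : ℝ → ℝ} (h0 : 0 < α) (h1 : α < 1)
    (hd : Differentiable ℝ φ) {B₁ B₂ : ℝ} (hB₁0 : 0 ≤ B₁) (hB₂0 : 0 ≤ B₂)
    (hB₁ : ∀ a b, |φ a - φ b| ≤ B₁ * |a - b|)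
    (hB₂ : ∀ a b, |deriv φ a - deriv φ b| ≤ B₂ * |a - b|)
    (hr : 0 < r) (hη : 0 < η)
    (hηinf : ∀ x : ℝ, ∃ y ∈ Set.Icc x (x + r), η ≤ |deriv φ y|) :
    ∃ β > 0, ∃ κ > 0, ∀ c : ℝ, 2 ^ (-α) * rhoConst α r ≤ c → c ≤ rhoConst α r → ∀ k : ℕ,
      ∃ p q : ℝ, 0 ≤ p ∧ p + 2 * β ≤ q ∧ q ≤ 1 ∧
        ∀ s ∈ Set.Icc p (p + β), ∀ t ∈ Set.Icc (q - β) q,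
          κ ≤ (φ (c * weierstrassH α (t + k)) - φ (c * weierstrassH α (s + k))) ^ 2 := by
  obtain ⟨M, hM, hM'⟩ := weierstrassH_holder (half_pos h0) (half_lt_self h0) h1
  have hρ := rhoConst_pos h0 h1 hr
  set ρ := rhoConst α r
  set d := min (η / (2 * (B₂ + 1))) (r / 2) with hdd
  have hd0 : 0 < d := lt_min (by positivity) (by positivity)
  have hB₂d : B₂ * d ≤ η / 2 := by
    have : d ≤ η / (2 * (B₂ + 1)) := min_le_left _ _
    rw [le_div_iff₀ (by positivity)] at this
    nlinarith
  set κ := η / 2 * d with hκ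
  have hκ0 : 0 < κ := by positivity
  -- a uniform modulus of continuity of `v ↦ φ (c h_α (v + k))`
  obtain ⟨δ, hδ0, hδ1, hδ⟩ : ∃ δ : ℝ, 0 < δ ∧ δ ≤ 1 ∧ B₁ * (ρ * (M * δ ^ (α / 2))) ≤ κ / 4 := by
    have hcont : Continuous fun δ : ℝ => B₁ * (ρ * (M * δ ^ (α / 2))) :=
      continuous_const.mul (continuous_const.mul (continuous_const.mul
        (continuous_id.rpow_const fun _ => Or.inr (by linarith))))
    have ht := hcont.tendsto 0
    rw [Real.zero_rpow (half_pos h0).ne', mul_zero, mul_zero, mul_zero] at ht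
    have hev := ht.eventually (gt_mem_nhds (by positivity : (0 : ℝ) < κ / 4))
    obtain ⟨ε, hε, hb⟩ := Metric.eventually_nhds_iff.1 hev
    refine ⟨min (ε / 2) 1, by positivity, min_le_right _ _, (hb ?_).le⟩
    rw [Real.dist_eq, sub_zero, abs_of_pos (by positivity)]
    exact lt_of_le_of_lt (min_le_left _ _) (by linarith)
  refine ⟨δ / 3, by positivity, (κ / 2) ^ 2, by positivity, fun c hc1 hc2 k => ?_⟩
  have hc0 : 0 < c := lt_of_lt_of_le (by positivity) hc1
  set g : ℝ → ℝ := fun v => φ (c * weierstrassH α (v + k)) with hg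
  have hmod : ∀ u v, |u - v| ≤ δ → |g u - g v| ≤ κ / 4 := by
    intro u v huv
    have e : u + k - (v + k) = u - v := by ring
    have h2 := hM' (u + k) (v + k) (by rw [e]; linarith)
    rw [e] at h2
    calc |g u - g v| ≤ B₁ * |c * weierstrassH α (u + k) - c * weierstrassH α (v + k)| := hB₁ _ _
      _ = B₁ * (c * |weierstrassH α (u + k) - weierstrassH α (v + k)|) := by
          rw [← mul_sub, abs_mul, abs_of_pos hc0]
      _ ≤ B₁ * (ρ * (M * δ ^ (α / 2))) := by
          gcongr
          refine h2.trans ?_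
          gcongr
      _ ≤ κ / 4 := hδ
  obtain ⟨a, ha⟩ := exists_Icc_subset_image h0 h1 hr k hc1
  obtain ⟨y, hy, hyη⟩ := hηinf a
  obtain ⟨p, hp, q, hq, hpq⟩ : ∃ p ∈ Set.Icc (0 : ℝ) 1, ∃ q ∈ Set.Icc (0 : ℝ) 1,
      κ ≤ |g p - g q| := by
    have hdr : d ≤ r / 2 := min_le_right _ _
    obtain ⟨e, he, hey⟩ : ∃ e : ℝ, |e| = d ∧ y + e ∈ Set.Icc a (a + r) := by
      rcases le_total y (a + r / 2) with h | h
      · exact ⟨d, abs_of_pos hd0, by constructor <;> linarith [hy.1]⟩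
      · exact ⟨-d, by rw [abs_neg, abs_of_pos hd0], by constructor <;> linarith [hy.2]⟩
    obtain ⟨p, hp, hpe⟩ := ha hey
    obtain ⟨q, hq, hqe⟩ := ha hy
    refine ⟨p, hp, q, hq, ?_⟩
    have := phi_variation hd hB₂ hB₂0 hyη (d := e) (by rw [he]; exact hB₂d)
    simp only at hpe hqe
    simp only [hg, hpe, hqe, hκ, ← he]
    exact this
  obtain ⟨p, hp, q, hq, hlt, hpq⟩ : ∃ p ∈ Set.Icc (0 : ℝ) 1, ∃ q ∈ Set.Icc (0 : ℝ) 1, p ≤ q ∧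
      κ ≤ |g q - g p| := by
    rcases le_total p q with h | h
    · exact ⟨p, hp, q, hq, h, by rwa [abs_sub_comm]⟩
    · exact ⟨q, hq, p, hp, h, hpq⟩
  have hsep : δ < q - p := by
    by_contra! h
    have := hmod q p (by rwa [abs_of_nonneg (by linarith)])
    linarith
  refine ⟨p, q, hp.1, by linarith, hq.2, fun s hs t ht => ?_⟩
  have e1 := hmod s p (by rw [abs_of_nonneg (by linarith [hs.1])]; linarith [hs.2])
  have e2 := hmod q t (by rw [abs_of_nonneg (by linarith [ht.2])]; linarith [ht.1])
  have e3 : κ / 2 ≤ |g t - g s| := by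
    have := abs_add_three (g q - g t) (g t - g s) (g s - g p)
    rw [show g q - g t + (g t - g s) + (g s - g p) = g q - g p by ring] at this
    linarith
  rw [← sq_abs (φ _ - φ _)]
  exact pow_le_pow_left₀ (by positivity) e3 2

/-! ### The double integral -/

/-- Lower bound for the double integral from the diagonal cells of side `1 / L`. The upper bound
`hD` on the increments makes the integrand bounded, so that both integrals genuinely exist. -/
lemma double_integral_lower {g : ℝ → ℝ} (hg : Continuous g) {D e β κ : ℝ} (he : 0 < e)
    (hD0 : 0 ≤ D)
    (hD : ∀ s t, 0 ≤ s → s ≤ t → t ≤ 1 → (g t - g s) ^ 2 ≤ D * (t - s) ^ e)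
    (hβ : 0 < β) (hκ : 0 < κ) {L : ℕ} (hL : 0 < L)
    (hcell : ∀ k : ℕ, ∃ p q : ℝ, 0 ≤ p ∧ p + 2 * β ≤ q ∧ q ≤ 1 ∧
        ∀ s ∈ Set.Icc p (p + β), ∀ t ∈ Set.Icc (q - β) q,
          κ ≤ (g ((t + k) / L) - g ((s + k) / L)) ^ 2) :
    β ^ 2 * κ * (L : ℝ) ^ (e - 1) ≤
      ∫ t in (0 : ℝ)..1, ∫ s in (0 : ℝ)..t, (g t - g s) ^ 2 / (t - s) ^ e := by
  have hL0 : (0 : ℝ) < L := by exact_mod_cast hL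
  set F : ℝ → ℝ → ℝ := fun t s => (g t - g s) ^ 2 / (t - s) ^ e with hF
  set G : ℝ → ℝ := fun t => ∫ s in (0 : ℝ)..t, F t s with hG
  have hFnn : ∀ s t, s ≤ t → 0 ≤ F t s := fun s t hst =>
    div_nonneg (sq_nonneg _) (Real.rpow_nonneg (by linarith) _)
  have hFle : ∀ s t, 0 ≤ s → s ≤ t → t ≤ 1 → F t s ≤ D := by
    intro s t hs hst ht
    exact div_le_of_le_mul₀ (Real.rpow_nonneg (by linarith) _) hD0 (hD s t hs hst ht)
  have hFm : Measurable (Function.uncurry F) := by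
    have := hg.measurable
    simp only [hF, Function.uncurry_def]
    fun_prop
  have hFi : ∀ t, t ≤ 1 → ∀ a b, 0 ≤ a → a ≤ b → b ≤ t →
      IntervalIntegrable (F t) volume a b := by
    intro t ht a b ha hab hb
    rw [intervalIntegrable_iff_integrableOn_Ioc_of_le hab]
    refine Measure.integrableOn_of_bounded (M := D) (by simp) ?_ ?_
    · exact (hFm.comp measurable_prodMk_left).aestronglyMeasurable
    · refine (ae_restrict_iff' measurableSet_Ioc).2 (Filter.Eventually.of_forall fun s hs => ?_)
      rw [Real.norm_eq_abs, abs_of_nonneg (hFnn s t (hs.2.trans hb))]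
      exact hFle s t (ha.trans hs.1.le) (hs.2.trans hb) ht
  have hGnn : ∀ t, 0 ≤ t → 0 ≤ G t := fun t ht =>
    intervalIntegral.integral_nonneg ht fun s hs => hFnn s t hs.2
  have hGle : ∀ t, 0 ≤ t → t ≤ 1 → G t ≤ D := by
    intro t h0 h1
    have h := intervalIntegral.integral_mono_on h0 (hFi t h1 0 t le_rfl h0 le_rfl)
      (intervalIntegrable_const (c := D)) (fun s hs => hFle s t hs.1 hs.2 h1)
    rw [intervalIntegral.integral_const, smul_eq_mul] at h
    have : (t - 0) * D ≤ D := by nlinarith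
    exact h.trans this
  have hGi : ∀ a b, 0 ≤ a → a ≤ b → b ≤ 1 → IntervalIntegrable G volume a b := by
    intro a b ha hab hb
    rw [intervalIntegrable_iff_integrableOn_Ioc_of_le hab]
    refine Integrable.of_bound (μ := volume.restrict (Set.Ioc a b)) ?_ D ?_
    · have hS : MeasurableSet {z : ℝ × ℝ | 0 < z.2 ∧ z.2 ≤ z.1} :=
        (measurableSet_lt measurable_const measurable_snd :
          MeasurableSet {z : ℝ × ℝ | 0 < z.2}).inter
          (measurableSet_le measurable_snd measurable_fst : MeasurableSet {z : ℝ × ℝ | z.2 ≤ z.1})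
      have hm := ((hFm.indicator hS).stronglyMeasurable).integral_prod_right' (ν := volume)
      refine (hm.aestronglyMeasurable (μ := volume.restrict (Set.Ioc a b))).congr ?_
      refine (ae_restrict_iff' measurableSet_Ioc).2
        (Filter.Eventually.of_forall fun t ht => ?_)
      simp only [hG]
      rw [intervalIntegral.integral_of_le (ha.trans ht.1.le),
        ← integral_indicator (measurableSet_Ioc : MeasurableSet (Set.Ioc (0 : ℝ) t))]
      rfl
    · refine (ae_restrict_iff' measurableSet_Ioc).2 (Filter.Eventually.of_forall fun t ht => ?_)
      have ht0 := ha.trans ht.1.le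
      rw [Real.norm_eq_abs, abs_of_nonneg (hGnn t ht0)]
      exact hGle t ht0 (ht.2.trans hb)
  have hkL : ∀ k < L, (0 : ℝ) ≤ (k : ℝ) / L ∧ ((k : ℝ) / L) ≤ ((k + 1 : ℕ) : ℝ) / L ∧
      ((k + 1 : ℕ) : ℝ) / L ≤ 1 := by
    intro k hk
    refine ⟨by positivity, by gcongr; simp, ?_⟩
    rw [div_le_one hL0]; exact_mod_cast hk
  have hsplit : ∫ t in (0 : ℝ)..1, G t =
      ∑ k ∈ Finset.range L, ∫ t in ((k : ℝ) / L)..((k + 1 : ℕ) : ℝ) / L, G t := by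
    rw [intervalIntegral.sum_integral_adjacent_intervals (a := fun k : ℕ => (k : ℝ) / L)]
    · simp [hL0.ne']
    · intro k hk
      obtain ⟨h1, h2, h3⟩ := hkL k hk
      exact hGi _ _ h1 h2 h3
  have hone : ∀ k < L, β / L * (β / L * (κ * (L : ℝ) ^ e)) ≤
      ∫ t in ((k : ℝ) / L)..((k + 1 : ℕ) : ℝ) / L, G t := by
    intro k hk
    obtain ⟨h1, h2, h3⟩ := hkL k hk
    obtain ⟨p, q, hp, hpq, hq, hb⟩ := hcell k
    have hB1 : (k : ℝ) / L ≤ (q - β + k) / L := by gcongr; linarith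
    have hB2 : (q - β + k) / L ≤ (q + k) / L := by gcongr; linarith
    have hB3 : (q + k) / L ≤ ((k + 1 : ℕ) : ℝ) / L := by push_cast; gcongr ?_ / _; linarith
    have hA1 : 0 ≤ (p + k) / L := by positivity
    have hA2 : (p + k) / L ≤ (p + β + k) / L := by gcongr; linarith
    have hA3 : (p + β + k) / L ≤ (q - β + k) / L := by gcongr; linarith
    have hGlow : ∀ t ∈ Set.Icc ((q - β + k) / L) ((q + k) / L),
        β / L * (κ * (L : ℝ) ^ e) ≤ G t := by
      intro t ht
      have ht1 : t ≤ 1 := ht.2.trans (hB3.trans h3)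
      have hAt : (p + β + k) / L ≤ t := hA3.trans ht.1
      have ht0 : 0 ≤ t := hA1.trans (hA2.trans hAt)
      have hFlow : ∀ s ∈ Set.Icc ((p + k) / L) ((p + β + k) / L), κ * (L : ℝ) ^ e ≤ F t s := by
        intro s hs
        have hst : s ≤ t := hs.2.trans hAt
        have hsq : κ ≤ (g t - g s) ^ 2 := by
          have := hb (s * L - k) ?_ (t * L - k) ?_
          · simpa [hL0.ne'] using this
          · have a1 := hs.1; have a2 := hs.2
            rw [div_le_iff₀ hL0] at a1; rw [le_div_iff₀ hL0] at a2
            constructor <;> linarith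
          · have a1 := ht.1; have a2 := ht.2
            rw [div_le_iff₀ hL0] at a1; rw [le_div_iff₀ hL0] at a2
            constructor <;> linarith
        -- on the diagonal the quotient would be the junk value `0 / 0`
        have hlt : s < t := by
          refine lt_of_le_of_ne hst fun h => ?_
          rw [h] at hsq; simp at hsq; linarith
        have hd : t - s ≤ 1 / L := by
          have a1 := hs.1; have a2 := ht.2
          rw [div_le_iff₀ hL0] at a1; rw [le_div_iff₀ hL0] at a2
          rw [le_div_iff₀ hL0]
          linarith
        have hpos : 0 < (t - s) ^ e := Real.rpow_pos_of_pos (by linarith) _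
        have hpow : (L : ℝ) ^ e * (t - s) ^ e ≤ 1 := by
          rw [← Real.mul_rpow hL0.le (by linarith)]
          refine Real.rpow_le_one (mul_nonneg hL0.le (by linarith)) ?_ he.le
          rw [le_div_iff₀ hL0] at hd
          linarith
        rw [hF]
        simp only
        rw [le_div_iff₀ hpos]
        nlinarith
      calc β / L * (κ * (L : ℝ) ^ e)
          = ∫ s in ((p + k) / L)..((p + β + k) / L), κ * (L : ℝ) ^ e := by
            rw [intervalIntegral.integral_const, smul_eq_mul]; ring
        _ ≤ ∫ s in ((p + k) / L)..((p + β + k) / L), F t s :=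
            intervalIntegral.integral_mono_on hA2 intervalIntegrable_const
              (hFi t ht1 _ _ hA1 hA2 hAt) hFlow
        _ ≤ G t := by
            refine intervalIntegral.integral_mono_interval hA1 hA2 hAt ?_
              (hFi t ht1 0 t le_rfl ht0 le_rfl)
            exact (ae_restrict_iff' measurableSet_Ioc).2
              (Filter.Eventually.of_forall fun s hs => hFnn s t hs.2)
    calc β / L * (β / L * (κ * (L : ℝ) ^ e))
        = ∫ t in ((q - β + k) / L)..((q + k) / L), β / L * (κ * (L : ℝ) ^ e) := by
          rw [intervalIntegral.integral_const, smul_eq_mul]; ring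
      _ ≤ ∫ t in ((q - β + k) / L)..((q + k) / L), G t :=
          intervalIntegral.integral_mono_on hB2 intervalIntegrable_const
            (hGi _ _ (h1.trans hB1) hB2 (hB3.trans h3)) hGlow
      _ ≤ _ := by
          refine intervalIntegral.integral_mono_interval hB1 hB2 hB3 ?_ (hGi _ _ h1 h2 h3)
          exact (ae_restrict_iff' measurableSet_Ioc).2
            (Filter.Eventually.of_forall fun t ht => hGnn t (h1.trans ht.1.le))
  calc β ^ 2 * κ * (L : ℝ) ^ (e - 1)
      = ∑ k ∈ Finset.range L, β / L * (β / L * (κ * (L : ℝ) ^ e)) := by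
        rw [Finset.sum_const, Finset.card_range, nsmul_eq_mul, Real.rpow_sub_one hL0.ne']
        field_simp
    _ ≤ _ := Finset.sum_le_sum fun k hk => hone k (Finset.mem_range.1 hk)
    _ = _ := hsplit.symm

lemma lipschitz_of_deriv_bound {f : ℝ → ℝ} (hf : Differentiable ℝ f) {C : ℝ}
    (hC : ∀ y, |deriv f y| ≤ C) (a b : ℝ) : |f a - f b| ≤ C * |a - b| := by
  have := Convex.norm_image_sub_le_of_norm_deriv_le (f := f) (s := Set.univ) (C := C)
    (fun x _ => hf x) (fun x _ => hC x) convex_univ (Set.mem_univ b) (Set.mem_univ a)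
  simpa using this

/-! ### Growth of the functional -/

theorem J_growth_along_weierstrass (H α r η : ℝ) (φ : ℝ → ℝ)
    (hH : H ∈ Set.Ioo (1 / 4 : ℝ) (1 / 2)) (hα : α ∈ Set.Ioo (H + 1 / 2) 1)
    (hφ : ContDiff ℝ (⊤ : ℕ∞) φ) (hφb : ∀ n : ℕ, ∃ C, ∀ y, |iteratedDeriv n φ y| ≤ C)
    (hr : 0 < r) (hη : 0 < η)
    (hηinf : ∀ x : ℝ, ∃ y ∈ Set.Icc x (x + r), η ≤ |deriv φ y|) :
    ∃ C > 0, ∀ lam : ℝ, 1 < lam →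
      C * lam ^ ((1 - 2 * H) / α) ≤
        Jfun H φ (fun t => lam * rhoConst α r * weierstrassH α t) := by
  obtain ⟨hH1, hH2⟩ := hH
  obtain ⟨hα1, h1⟩ := hα
  have h0 : 0 < α := by linarith
  have hd : Differentiable ℝ φ := hφ.differentiable (by simp)
  have hd' : Differentiable ℝ (deriv φ) := by
    have := hφ.differentiable_iteratedDeriv 1 (by exact_mod_cast WithTop.coe_lt_top 1)
    rwa [iteratedDeriv_one] at this
  obtain ⟨B₁, hB₁⟩ := hφb 1
  obtain ⟨B₂, hB₂⟩ := hφb 2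
  rw [iteratedDeriv_one] at hB₁
  rw [iteratedDeriv_succ, iteratedDeriv_one] at hB₂
  have hB₁0 : 0 ≤ B₁ := (abs_nonneg _).trans (hB₁ 0)
  have hB₂0 : 0 ≤ B₂ := (abs_nonneg _).trans (hB₂ 0)
  have hLip := lipschitz_of_deriv_bound hd hB₁
  obtain ⟨β, hβ, κ, hκ, hcell⟩ := cell_lemma h0 h1 hd hB₁0 hB₂0 hLip
    (lipschitz_of_deriv_bound hd' hB₂) hr hη hηinf
  -- `1 - H < α`, so the squared increments are `O((t - s) ^ (2 - 2H))`
  obtain ⟨M, hM, hM'⟩ := weierstrassH_holder (α := α) (γ := 1 - H) (by linarith) (by linarith) h1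
  have hρ := rhoConst_pos h0 h1 hr
  have hcont := weierstrassH_continuous h0 h1
  refine ⟨β ^ 2 * κ, by positivity, fun lam hlam => ?_⟩
  have hl0 : 0 < lam := by linarith
  set μ := lam ^ (1 / α) with hμ
  have hμ1 : 1 < μ := Real.one_lt_rpow hlam (by positivity)
  have hμ0 : 0 < μ := by linarith
  have hμα : μ ^ α = lam := by
    rw [hμ, ← Real.rpow_mul hl0.le, one_div_mul_cancel h0.ne', Real.rpow_one]
  obtain ⟨n, hn1, hn2⟩ := exists_nat_pow_near hμ1.le (one_lt_two (α := ℝ))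
  set x : ℝ → ℝ := fun t => lam * rhoConst α r * weierstrassH α t with hx
  have hN : (0 : ℝ) < 2 ^ (n + 1) := by positivity
  -- the amplitude of the path after rescaling the cells of side `2^{-(n+1)}` to unit size
  set c := lam * ((2 : ℝ) ^ (n + 1)) ^ (-α) * rhoConst α r with hc
  have hcl : lam * ((2 : ℝ) ^ (n + 1)) ^ (-α) = (μ / 2 ^ (n + 1)) ^ α := by
    rw [Real.div_rpow hμ0.le hN.le, hμα, Real.rpow_neg hN.le, div_eq_mul_inv]
  have hc1 : 2 ^ (-α) * rhoConst α r ≤ c := by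
    rw [hc, hcl]
    gcongr
    rw [Real.rpow_neg (by norm_num), ← Real.inv_rpow (by norm_num)]
    refine Real.rpow_le_rpow (by norm_num) ?_ h0.le
    rw [le_div_iff₀ hN, pow_succ]
    linarith
  have hc2 : c ≤ rhoConst α r := by
    rw [hc, hcl]
    refine mul_le_of_le_one_left hρ.le (Real.rpow_le_one (by positivity) ?_ h0.le)
    rw [div_le_one hN]
    exact hn2.le
  have hxs : ∀ (v : ℝ) (k : ℕ), x ((v + k) / ((2 ^ (n + 1) : ℕ) : ℝ)) =
      c * weierstrassH α (v + k) := by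
    intro v k
    simp only [hx, hc]
    push_cast
    rw [weierstrassH_div_pow]
    ring
  have key := double_integral_lower (g := fun t => φ (x t)) (e := 2 - 2 * H)
    (D := (B₁ * (lam * rhoConst α r * M)) ^ 2) (β := β) (κ := κ) (L := 2 ^ (n + 1))
    (hd.continuous.comp (by fun_prop)) (by linarith) (by positivity) ?_ hβ hκ (by positivity) ?_
  · refine le_trans ?_ key
    gcongr
    rw [show (1 - 2 * H) / α = 1 / α * (1 - 2 * H) by ring, Real.rpow_mul hl0.le, ← hμ,
      show 2 - 2 * H - 1 = 1 - 2 * H by ring]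
    refine Real.rpow_le_rpow hμ0.le ?_ (by linarith)
    push_cast
    exact hn2.le
  · intro s t hs hst ht
    have hts : 0 ≤ t - s := by linarith
    have h := hM' t s (by rw [abs_of_nonneg hts]; linarith)
    have h2 : |φ (x t) - φ (x s)| ≤ B₁ * (lam * rhoConst α r * M) * (t - s) ^ (1 - H) := by
      calc |φ (x t) - φ (x s)| ≤ B₁ * |x t - x s| := hLip _ _
        _ = B₁ * (lam * rhoConst α r * |weierstrassH α t - weierstrassH α s|) := by
            simp only [hx]
            rw [← mul_sub, abs_mul, abs_of_pos (by positivity)]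
        _ ≤ B₁ * (lam * rhoConst α r * (M * |t - s| ^ (1 - H))) := by gcongr
        _ = _ := by rw [abs_of_nonneg hts]; ring
    have e : ((t - s) ^ (1 - H)) ^ 2 = (t - s) ^ (2 - 2 * H) := by
      rw [← Real.rpow_natCast, ← Real.rpow_mul hts]
      congr 1
      push_cast; ring
    rw [← sq_abs, ← e, ← mul_pow]
    exact pow_le_pow_left₀ (abs_nonneg _) h2 2
  · intro k
    obtain ⟨p, q, hp, hpq, hq, hb⟩ := hcell c hc1 hc2 k
    refine ⟨p, q, hp, hpq, hq, fun s hs t ht => ?_⟩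
    simp only [hxs]
    exact hb s hs t ht
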